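/- Let G be an edge-colored graph with d^c(v) ≥ k for every vertex v, let P = u_0 u_1 … u_t be a rainbow path of maximum length t among all rainbow paths in G, with x = u_0 and y = u_t, and suppose G contains no rainbow cycle of length t+1 and that t < ⌈3k/5⌉. Then M_x ∩ T_y ≠ ∅. -/

import Mathlib

/-!
The hypothesis on `t` says `5 * t < 3 * k`. An edge at `x` whose color is not on the maximum rainbow
path `P` must end in `P`, since otherwise it would extend `P`, and it cannot end in `u_t`, since it
would close a rainbow cycle of length `t + 1`; hence it ends in a vertex counted by `Tx`
(`exists_mem_Tx`). As `P` carries at most `t` colors, `|Tx| ≥ k - t` (`le_length_add_ncard_Tx`), and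
by reversing `P` also `|Ty| ≥ k - t`. The sets `Mx` and `Ty` both lie in `{1, …, t - 2}`, while
`2 * (k - t) > t - 2`, so they meet.
-/


open SimpleGraph

/-- The color degree of a vertex `v`: the number of distinct colors appearing on
edges incident to `v`. -/
noncomputable def colorDegree {V : Type*} (G : SimpleGraph V) (c : Sym2 V → ℕ) (v : V) : ℕ :=
  (c '' G.incidenceSet v).ncard

/-- A rainbow path: a path all of whose edges have pairwise distinct colors. -/
def IsRainbowPath {V : Type*} (G : SimpleGraph V) (c : Sym2 V → ℕ) {u v : V}
    (p : G.Walk u v) : Prop :=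
  p.IsPath ∧ (p.edges.map c).Nodup

/-- A rainbow cycle: a cycle all of whose edges have pairwise distinct colors. -/
def IsRainbowCycle {V : Type*} (G : SimpleGraph V) (c : Sym2 V → ℕ) {u : V}
    (p : G.Walk u u) : Prop :=
  p.IsCycle ∧ (p.edges.map c).Nodup

/-- `Tx`: the set of indices `i` with `2 ≤ i ≤ t-1` such that `(x, u_i)` is an edge whose
color does not appear on `P` (i.e. lies in `Uᶜ`), where `P = u_0 u_1 … u_t` with `x = u_0`. -/
def Tx {V : Type*} (G : SimpleGraph V) (c : Sym2 V → ℕ) {x y : V} (p : G.Walk x y) : Set ℕ :=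
  {i : ℕ | 2 ≤ i ∧ i ≤ p.length - 1 ∧ G.Adj x (p.getVert i) ∧
    c s(x, p.getVert i) ∉ p.edges.map c}

/-- `Ty`: the set of indices `i` with `1 ≤ i ≤ t-2` such that `(y, u_i)` is an edge whose
color does not appear on `P` (i.e. lies in `Uᶜ`), where `P = u_0 u_1 … u_t` with `y = u_t`. -/
def Ty {V : Type*} (G : SimpleGraph V) (c : Sym2 V → ℕ) {x y : V} (p : G.Walk x y) : Set ℕ :=
  {i : ℕ | 1 ≤ i ∧ i ≤ p.length - 2 ∧ G.Adj y (p.getVert i) ∧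
    c s(y, p.getVert i) ∉ p.edges.map c}

/-- `Mx`: the set of indices `j` such that `j + 1 ∈ Tx`. -/
def Mx {V : Type*} (G : SimpleGraph V) (c : Sym2 V → ℕ) {x y : V} (p : G.Walk x y) : Set ℕ :=
  {j : ℕ | j + 1 ∈ Tx G c p}

/-- Every color seen at `x` but not on the maximum rainbow path `p` appears on an edge from `x` to
a vertex indexed by `Tx`. -/
lemma exists_mem_Tx {V : Type*} (G : SimpleGraph V) (c : Sym2 V → ℕ)
    {x y : V} (p : G.Walk x y) (hp : IsRainbowPath G c p)
    (hmax : ∀ (a b : V) (q : G.Walk a b), IsRainbowPath G c q → q.length ≤ p.length)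
    (hnocyc : ∀ (u : V) (q : G.Walk u u), IsRainbowCycle G c q → q.length ≠ p.length + 1)
    {v : V} (hv : G.Adj x v) (hcol : c s(x, v) ∉ p.edges.map c) :
    ∃ i ∈ Tx G c p, c s(x, p.getVert i) = c s(x, v) := by
  have hcol' : c s(v, x) ∉ p.edges.map c := by rwa [Sym2.eq_swap]
  have hnodup : ((Walk.cons hv.symm p).edges.map c).Nodup := by
    rw [Walk.edges_cons, List.map_cons]
    exact List.nodup_cons.2 ⟨hcol', hp.2⟩
  by_cases hvp : v ∈ p.support
  · obtain ⟨i, rfl, hi⟩ := Walk.mem_support_iff_exists_getVert.1 hvp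
    refine ⟨i, ⟨?_, ?_, hv, hcol⟩, rfl⟩
    · -- `i = 0` would be a loop at `x`, and `i = 1` would give the color of the first edge of `p`.
      by_contra hlt
      have : i = 0 ∨ i = 1 := by omega
      rcases this with rfl | rfl
      · simp at hv
      · apply hcol
        cases p with
        | nil => simp at hi
        | cons h q => simp
    · by_contra hgt
      have hit : i = p.length := by omega
      subst hit
      rw [Walk.getVert_length] at hv hcol hcol'
      refine hnocyc y (Walk.cons hv.symm p) ⟨?_, ?_⟩ (by simp)
      · rw [Walk.cons_isCycle_iff]
        exact ⟨hp.1, fun h => hcol' (List.mem_map_of_mem h)⟩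
      · rw [Walk.edges_cons, List.map_cons]
        exact List.nodup_cons.2 ⟨hcol', hp.2⟩
  · have := hmax _ _ (Walk.cons hv.symm p) ⟨hp.1.cons hvp, hnodup⟩
    simp at this

lemma le_length_add_ncard_Tx {V : Type*} [Fintype V] (G : SimpleGraph V) (c : Sym2 V → ℕ)
    {x y : V} (p : G.Walk x y) (hp : IsRainbowPath G c p)
    (hmax : ∀ (a b : V) (q : G.Walk a b), IsRainbowPath G c q → q.length ≤ p.length)
    (hnocyc : ∀ (u : V) (q : G.Walk u u), IsRainbowCycle G c q → q.length ≠ p.length + 1) :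
    colorDegree G c x ≤ p.length + (Tx G c p).ncard := by
  have hTfin : (Tx G c p).Finite :=
    (Set.finite_Icc 2 (p.length - 1)).subset fun i hi => ⟨hi.1, hi.2.1⟩
  set U : Finset ℕ := (p.edges.map c).toFinset with hU
  have hsub : c '' G.incidenceSet x ⊆
      (U : Set ℕ) ∪ (fun i => c s(x, p.getVert i)) '' Tx G c p := by
    rintro _ ⟨e, he, rfl⟩
    obtain ⟨v, rfl⟩ := Sym2.mem_iff_exists.1 he.2
    by_cases hc : c s(x, v) ∈ p.edges.map c
    · exact Or.inl (by simpa [hU] using hc)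
    · exact Or.inr (exists_mem_Tx G c p hp hmax hnocyc he.1 hc)
  have hUcard : U.card ≤ p.length := by
    simpa using List.toFinset_card_le (p.edges.map c)
  calc colorDegree G c x
      ≤ ((U : Set ℕ) ∪ (fun i => c s(x, p.getVert i)) '' Tx G c p).ncard :=
        Set.ncard_le_ncard hsub (U.finite_toSet.union (hTfin.image _))
    _ ≤ (U : Set ℕ).ncard + ((fun i => c s(x, p.getVert i)) '' Tx G c p).ncard :=
        Set.ncard_union_le _ _
    _ ≤ p.length + (Tx G c p).ncard :=
        add_le_add (by rwa [Set.ncard_coe_finset]) (Set.ncard_image_le hTfin)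

/-- Reversing the path exchanges the roles of `Tx` and `Ty`, through `i ↦ t - i`. -/
lemma ncard_Tx_reverse_le {V : Type*} (G : SimpleGraph V) (c : Sym2 V → ℕ)
    {x y : V} (p : G.Walk x y) : (Tx G c p.reverse).ncard ≤ (Ty G c p).ncard := by
  have hfin : (Ty G c p).Finite :=
    (Set.finite_Icc 1 (p.length - 2)).subset fun i hi => ⟨hi.1, hi.2.1⟩
  refine Set.ncard_le_ncard_of_injOn (fun i => p.length - i) ?_ ?_ hfin
  · rintro i ⟨h2, hi, hadj, hc⟩
    rw [Walk.length_reverse] at hi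
    rw [Walk.getVert_reverse] at hadj hc
    rw [Walk.edges_reverse, List.map_reverse, List.mem_reverse] at hc
    exact ⟨by omega, by omega, hadj, hc⟩
  · rintro i ⟨_, hi, _⟩ j ⟨_, hj, _⟩ hij
    rw [Walk.length_reverse] at hi hj
    simp only at hij
    omega

theorem Mx_inter_Ty_nonempty {V : Type*} [Fintype V]
    (G : SimpleGraph V) (c : Sym2 V → ℕ) (k t : ℕ)
    (hdeg : ∀ v : V, k ≤ colorDegree G c v)
    {x y : V} (p : G.Walk x y) (hp : IsRainbowPath G c p) (hlen : p.length = t)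
    (hmax : ∀ (a b : V) (q : G.Walk a b), IsRainbowPath G c q → q.length ≤ t)
    (hnocyc : ∀ (u : V) (q : G.Walk u u), IsRainbowCycle G c q → q.length ≠ t + 1)
    (ht : t < ⌈(3 * (k : ℚ)) / 5⌉₊) :
    (Mx G c p ∩ Ty G c p).Nonempty := by
  subst hlen
  have hkt : 5 * p.length < 3 * k := by
    rw [Nat.lt_ceil, lt_div_iff₀ (by norm_num)] at ht
    have : p.length * 5 < 3 * k := by exact_mod_cast ht
    omega
  have hx := (hdeg x).trans (le_length_add_ncard_Tx G c p hp hmax hnocyc)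
  have hprev : IsRainbowPath G c p.reverse := by
    refine ⟨hp.1.reverse, ?_⟩
    rw [Walk.edges_reverse, List.map_reverse]
    exact List.nodup_reverse.2 hp.2
  have hy := (hdeg y).trans (le_length_add_ncard_Tx G c p.reverse hprev
    (by simpa using hmax) (by simpa using hnocyc))
  rw [Walk.length_reverse] at hy
  have hrev := ncard_Tx_reverse_le G c p
  have hMsub : Mx G c p ⊆ Set.Icc 1 (p.length - 2) := by
    rintro j ⟨h2, hj, _⟩
    exact ⟨by omega, by omega⟩
  have hTsub : Ty G c p ⊆ Set.Icc 1 (p.length - 2) := fun i hi => ⟨hi.1, hi.2.1⟩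
  have hMfin := (Set.finite_Icc 1 (p.length - 2)).subset hMsub
  have hTfin := (Set.finite_Icc 1 (p.length - 2)).subset hTsub
  have hTM : (Tx G c p).ncard ≤ (Mx G c p).ncard := by
    refine Set.ncard_le_ncard_of_injOn (fun i => i - 1) ?_ ?_ hMfin
    · intro i hi
      have h1 : i - 1 + 1 = i := by have := hi.1; omega
      change i - 1 + 1 ∈ Tx G c p
      rwa [h1]
    · intro i hi j hj hij
      have := hi.1
      have := hj.1
      simp only at hij
      omega
  by_contra hne
  have hdisj : Disjoint (Mx G c p) (Ty G c p) :=
    Set.disjoint_iff_inter_eq_empty.2 (Set.not_nonempty_iff_eq_empty.1 hne)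
  have hunion := Set.ncard_union_eq hdisj hMfin hTfin
  have hle := Set.ncard_le_ncard (Set.union_subset hMsub hTsub) (Set.finite_Icc _ _)
  have hIcc : (Set.Icc 1 (p.length - 2)).ncard = p.length - 2 := by
    rw [← Finset.coe_Icc, Set.ncard_coe_finset, Nat.card_Icc]
    omega
  omega
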